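/- Let P and Q be finite posets, let k = |P| ≥ 1, and suppose P ⪯ Q. Then a function g from the elements of Q to the elements of P chosen uniformly at random among all such functions is a witness for P ⪯ Q with probability at least k^(−2^k · k). Equivalently, the number of total functions g : Q → P that are witnesses for P ⪯ Q is at least k^(|Q|) · k^(−2^k · k). -/

import Mathlib

/-- A chain in a poset: a finite sequence `(v_1, …, v_n)` with `v_i < v_j` for `i < j`,
modeled as a strictly increasing list. -/
def IsPosetChain {α : Type*} [PartialOrder α] (l : List α) : Prop :=
  l.Chain' (· < ·)

/-- A partial function `f : Q ⇀ P` (modeled as `Q → Option P`) is a witness for `P ⪯ Q`: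
for every chain `(c_1, …, c_n)` in `P` there is a chain `(c'_1, …, c'_n)` in `Q`
with `f (c'_i) = c_i` for all `i`. -/
def IsChainMinorWitness {P Q : Type*} [PartialOrder P] [PartialOrder Q]
    (f : Q → Option P) : Prop :=
  ∀ c : List P, IsPosetChain c →
    ∃ c' : List Q, IsPosetChain c' ∧ c'.map f = c.map some

/-- `P` is a chain minor of `Q` if there is a witness. -/
def ChainMinor (P Q : Type*) [PartialOrder P] [PartialOrder Q] : Prop :=
  ∃ f : Q → Option P, IsChainMinorWitness f

/-- A total function `g : Q → P` is a witness for `P ⪯ Q`: for every chain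
`(c_1, …, c_n)` in `P` there is a chain `(c'_1, …, c'_n)` in `Q` with
`g (c'_i) = c_i` for all `i`. -/
def IsTotalChainMinorWitness {P Q : Type*} [PartialOrder P] [PartialOrder Q]
    (g : Q → P) : Prop :=
  ∀ c : List P, IsPosetChain c →
    ∃ c' : List Q, IsPosetChain c' ∧ c'.map g = c

theorem chain_eq_of_toFinset {α : Type*} [PartialOrder α] [DecidableEq α] {l m : List α}
    (hl : IsPosetChain l) (hm : IsPosetChain m) (h : l.toFinset = m.toFinset) : l = m := by
  have hl' : l.Pairwise (· < ·) := List.isChain_iff_pairwise.1 hl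
  have hm' : m.Pairwise (· < ·) := List.isChain_iff_pairwise.1 hm
  have hln : l.Nodup := hl'.imp (fun h => ne_of_lt h)
  have hmn : m.Nodup := hm'.imp (fun h => ne_of_lt h)
  have hp : l.Perm m := (List.perm_ext_iff_of_nodup hln hmn).2 (fun a => by
    rw [← List.mem_toFinset, h, List.mem_toFinset])
  exact List.Perm.eq_of_pairwise (fun a b _ _ h1 h2 => absurd (h1.trans h2) (lt_irrefl _)) hl' hm' hp

theorem exists_support {P Q : Type*} [Fintype P] [PartialOrder P]
    [Fintype Q] [PartialOrder Q] (h : ChainMinor P Q) :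
    ∃ (S : Finset Q) (φ : Q → Option P), S.card ≤ 2 ^ Fintype.card P * Fintype.card P ∧
      (∀ q ∈ S, ∃ p, φ q = some p) ∧
      ∀ g : Q → P, (∀ q ∈ S, φ q = some (g q)) → IsTotalChainMinorWitness g := by
  classical
  obtain ⟨f, hf⟩ := h
  have key : ∀ s : Finset P, ∃ T : Finset Q, T.card ≤ Fintype.card P ∧
      (∀ q ∈ T, ∃ p, f q = some p) ∧
      ∀ c : List P, IsPosetChain c → c.toFinset = s →
        ∃ c' : List Q, IsPosetChain c' ∧ c'.map f = c.map some ∧ ∀ q ∈ c', q ∈ T := by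
    intro s
    by_cases hs : ∃ c : List P, IsPosetChain c ∧ c.toFinset = s
    · obtain ⟨c, hc, rfl⟩ := hs
      obtain ⟨c', hc', hm⟩ := hf c hc
      refine ⟨c'.toFinset, ?_, ?_, ?_⟩
      · have hl : c'.length = c.length := by simpa using congrArg List.length hm
        have hn : c.Nodup :=
          (List.isChain_iff_pairwise.1 hc : c.Pairwise (· < ·)).imp (fun h => ne_of_lt h)
        exact (List.toFinset_card_le c').trans (hl ▸ hn.length_le_card)
      · intro q hq
        have : f q ∈ c'.map f := List.mem_map_of_mem (List.mem_toFinset.1 hq)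
        rw [hm] at this
        obtain ⟨p, _, hp⟩ := List.mem_map.1 this
        exact ⟨p, hp.symm⟩
      · intro d hd hdc
        obtain rfl := chain_eq_of_toFinset hd hc hdc
        exact ⟨c', hc', hm, fun q hq => List.mem_toFinset.2 hq⟩
    · exact ⟨∅, by simp, by simp, fun c hc h => absurd ⟨c, hc, h⟩ hs⟩
  choose T hT1 hT2 hT3 using key
  refine ⟨Finset.univ.biUnion T, f, ?_, ?_, ?_⟩
  · refine (Finset.card_biUnion_le_card_mul _ _ _ (fun s _ => hT1 s)).trans ?_
    simp
  · intro q hq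
    obtain ⟨s, _, hs⟩ := Finset.mem_biUnion.1 hq
    exact hT2 s q hs
  · intro g hg c hc
    obtain ⟨c', hc', hm, hq⟩ := hT3 c.toFinset c hc rfl
    refine ⟨c', hc', ?_⟩
    apply List.map_injective_iff.2 (Option.some_injective P)
    rw [← hm, List.map_map]
    apply List.map_congr_left
    intro q hqc
    exact (hg q (Finset.mem_biUnion.2 ⟨_, Finset.mem_univ _, hq q hqc⟩)).symm

theorem count_witness {P Q : Type*} [Fintype P] [PartialOrder P]
    [Fintype Q] [PartialOrder Q] (hk1 : 1 ≤ Fintype.card P) (h : ChainMinor P Q) :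
    Fintype.card P ^ Fintype.card Q ≤ Nat.card {g : Q → P // IsTotalChainMinorWitness g} *
      Fintype.card P ^ (2 ^ Fintype.card P * Fintype.card P) := by
  classical
  obtain ⟨S, f, hS, hf, hw⟩ := exists_support h
  choose v hv using hf
  let F : ({q // q ∉ S} → P) → {g : Q → P // IsTotalChainMinorWitness g} := fun u =>
    ⟨fun q => if hq : q ∈ S then v q hq else u ⟨q, hq⟩, hw _ (fun q hq => by
      simp only [hq, dif_pos]
      exact hv q hq)⟩
  have hF : Function.Injective F := by
    intro u w huw
    funext ⟨q, hq⟩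
    have := congrFun (congrArg Subtype.val huw) q
    simpa [F, hq] using this
  have h1 := Nat.card_le_card_of_injective F hF
  have h2 : Nat.card ({q // q ∉ S} → P) = Fintype.card P ^ (Fintype.card Q - S.card) := by
    rw [Nat.card_eq_fintype_card, Fintype.card_fun, Fintype.card_subtype_compl,
      Fintype.card_coe]
  rw [h2] at h1
  calc Fintype.card P ^ Fintype.card Q
      = Fintype.card P ^ (Fintype.card Q - S.card) * Fintype.card P ^ S.card := by
        rw [← pow_add, Nat.sub_add_cancel (Finset.card_le_univ S)]
    _ ≤ _ := Nat.mul_le_mul h1 (Nat.pow_le_pow_right hk1 hS)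

/-- If `P ⪯ Q` and `k = |P| ≥ 1`, then a uniformly random total function `g : Q → P`
is a witness for `P ⪯ Q` with probability at least `k ^ (-2 ^ k * k)`; equivalently,
the number of total witnesses is at least `k ^ |Q| * k ^ (-2 ^ k * k)`.
(The probability is the number of witnesses divided by `k ^ |Q|`, the total number
of functions `Q → P`.) -/
theorem random_function_is_witness {P Q : Type*} [Fintype P] [PartialOrder P]
    [Fintype Q] [PartialOrder Q] (k : ℕ) (hk : k = Fintype.card P) (hk1 : 1 ≤ k)
    (h : ChainMinor P Q) :
    (Nat.card {g : Q → P // IsTotalChainMinorWitness g} : ℝ) / (k : ℝ) ^ Fintype.card Q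
        ≥ (k : ℝ) ^ (-((2 ^ k * k : ℕ) : ℤ))
    ∧ (Nat.card {g : Q → P // IsTotalChainMinorWitness g} : ℝ)
        ≥ (k : ℝ) ^ Fintype.card Q * (k : ℝ) ^ (-((2 ^ k * k : ℕ) : ℤ)) := by
  subst hk
  have hc := count_witness hk1 h
  have hpos : (0 : ℝ) < (Fintype.card P : ℝ) := by exact_mod_cast hk1
  have hR : (Fintype.card P : ℝ) ^ Fintype.card Q ≤
      (Nat.card {g : Q → P // IsTotalChainMinorWitness g} : ℝ) *
      (Fintype.card P : ℝ) ^ (2 ^ Fintype.card P * Fintype.card P) := by exact_mod_cast hc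
  have h2 : (Nat.card {g : Q → P // IsTotalChainMinorWitness g} : ℝ)
        ≥ (Fintype.card P : ℝ) ^ Fintype.card Q *
          (Fintype.card P : ℝ) ^ (-((2 ^ Fintype.card P * Fintype.card P : ℕ) : ℤ)) := by
    rw [zpow_neg, zpow_natCast, ← div_eq_mul_inv, ge_iff_le, div_le_iff₀ (pow_pos hpos _)]
    exact hR
  refine ⟨?_, h2⟩
  rw [ge_iff_le, le_div_iff₀ (pow_pos hpos _), mul_comm]
  exact h2
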